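/- arXiv:1904.10706 — 5 statements merged into one kernel-verified Lean document; each statement's English description precedes it below -/
import Mathlib

section
/- Let (H, f) be an LP-type problem whose combinatorial dimension is at most d, let I be a finite index set with |I| = m, and let π : I → H model a multiset of m elements of H. For an integer r with 1 ≤ r < m and each r-element subset R ⊆ I, define the violator set V_R = { i ∈ I : f(π(R)) < f(π(R) ∪ {π(i)}) }. Then the sum of |V_R| over all r-element subsets R of I is at most d · C(m, r+1); equivalently, the expected size of V_R for a uniformly random r-element subset R of I is at most d · (m − r)/(r + 1). -/
open Finset

/-! For `i ∉ R` and `Q = R ∪ {i}`, the element `i` violates `R` exactly when it is extreme in `Q`,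
that is, when deleting it lowers the value of `Q`. So the violators of all `r`-subsets are counted
by the extreme elements of all `(r + 1)`-subsets. Every extreme element of `Q` lies in each basis of
`Q`, so there are at most `d` of them. Multisets reduce to sets: a basis of `f` pulled back along
`π` contains no two copies of an element, and its image is a basis of `f`. -/

section Bases

variable {α T : Type*} [Preorder T]

/-- The bases of an LP-type problem: the sets all of whose proper subsets have a smaller value. -/
def IsLPBasis (f : Finset α → T) (B : Finset α) : Prop :=
  ∀ B' : Finset α, B' ⊂ B → f B' < f B

/-- The combinatorial dimension of `f`, the maximum cardinality of a basis, is at most `d`. -/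
def CombinatorialDimLE (f : Finset α → T) (d : ℕ) : Prop :=
  ∀ B : Finset α, IsLPBasis f B → #B ≤ d

theorem exists_isLPBasis_subset {f : Finset α → T} (hf : Monotone f) (G : Finset α) :
    ∃ B ⊆ G, IsLPBasis f B ∧ f G ≤ f B := by
  obtain ⟨B, hBG, hB⟩ := exists_minimal_le_of_wellFoundedLT (fun B ↦ f G ≤ f B) G le_rfl
  exact ⟨B, hBG, fun B' hB' ↦ (hf hB'.le).lt_of_not_ge fun hle ↦
    hB.not_prop_of_lt hB' (hB.prop.trans hle), hB.prop⟩

end Bases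

section Pullback

variable {α ι T : Type*} [Preorder T] [DecidableEq α] {f : Finset α → T} {π : ι → α} {B : Finset ι}

theorem IsLPBasis.injOn_of_comp_image (hB : IsLPBasis (f ∘ image π) B) : Set.InjOn π B := by
  obtain ⟨B', hB'B, hinj, himage⟩ :=
    exists_subset_injOn_image_eq_of_surjOn (f := π) B (B.image π) (by simp [Set.surjOn_image])
  obtain rfl | hss := (coe_subset.1 hB'B).eq_or_ssubset
  · exact hinj
  · exact absurd (hB B' hss) (by simp [himage])

theorem IsLPBasis.image_of_comp_image (hB : IsLPBasis (f ∘ image π) B) :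
    IsLPBasis f (B.image π) := by
  intro C hC
  obtain ⟨B', hB'B, rfl⟩ := subset_image_iff.1 hC.subset
  exact hB B' (hB'B.ssubset_of_ne fun h ↦ hC.ne (h ▸ rfl))

theorem CombinatorialDimLE.comp_image {d : ℕ} (hd : CombinatorialDimLE f d) (π : ι → α) :
    CombinatorialDimLE (f ∘ image π) d := fun _ hB ↦
  (card_image_of_injOn hB.injOn_of_comp_image).symm.trans_le (hd _ hB.image_of_comp_image)

end Pullback

section Sampling

variable {ι T : Type*} [Preorder T] [DecidableEq ι] [DecidableLT T] {f : Finset ι → T}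

/-- The violator set of `R`: the elements whose addition to `R` increases the value. -/
def violators [Fintype ι] (f : Finset ι → T) (R : Finset ι) : Finset ι :=
  {i | f R < f (insert i R)}

/-- The extreme elements of `Q`: the elements whose removal from `Q` decreases the value. -/
def extremes (f : Finset ι → T) (Q : Finset ι) : Finset ι :=
  {i ∈ Q | f (Q.erase i) < f Q}

theorem extremes_subset_of_le (hf : Monotone f) {B Q : Finset ι} (hBQ : B ⊆ Q) (hle : f Q ≤ f B) :
    extremes f Q ⊆ B := by
  intro i hi
  by_contra hiB
  have hB_le : f B ≤ f (Q.erase i) := hf (subset_erase.2 ⟨hBQ, hiB⟩)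
  exact (mem_filter.1 hi).2.not_ge (hle.trans hB_le)

theorem card_extremes_le (hf : Monotone f) {d : ℕ} (hd : CombinatorialDimLE f d) (Q : Finset ι) :
    #(extremes f Q) ≤ d := by
  obtain ⟨B, hBQ, hB, hle⟩ := exists_isLPBasis_subset hf Q
  exact (card_le_card (extremes_subset_of_le hf hBQ hle)).trans (hd B hB)

variable [Fintype ι]

theorem notMem_of_mem_violators {R : Finset ι} {i : ι} (hi : i ∈ violators f R) : i ∉ R := by
  intro hiR
  simp [violators, insert_eq_of_mem hiR] at hi

theorem mem_extremes_insert_of_mem_violators {R : Finset ι} {i : ι} (hi : i ∈ violators f R) :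
    i ∈ extremes f (insert i R) := by
  simpa [extremes, erase_insert (notMem_of_mem_violators hi), violators] using hi

theorem mem_violators_erase_of_mem_extremes {Q : Finset ι} {i : ι} (hi : i ∈ extremes f Q) :
    i ∈ violators f (Q.erase i) := by
  obtain ⟨hiQ, hlt⟩ := mem_filter.1 hi
  simpa [violators, insert_erase hiQ] using hlt

theorem sum_card_violators_eq_sum_card_extremes (f : Finset ι → T) (r : ℕ) :
    ∑ R ∈ powersetCard r univ, #(violators f R) =
      ∑ Q ∈ powersetCard (r + 1) univ, #(extremes f Q) := by
  simp only [← card_sigma]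
  refine card_nbij' (fun p ↦ ⟨insert p.2 p.1, p.2⟩) (fun p ↦ ⟨p.1.erase p.2, p.2⟩) ?_ ?_ ?_ ?_
  · rintro ⟨R, i⟩ h
    obtain ⟨hR, hi⟩ : #R = r ∧ i ∈ violators f R := by simpa using h
    simpa [card_insert_of_notMem (notMem_of_mem_violators hi), hR]
      using mem_extremes_insert_of_mem_violators hi
  · rintro ⟨Q, i⟩ h
    obtain ⟨hQ, hi⟩ : #Q = r + 1 ∧ i ∈ extremes f Q := by simpa using h
    simpa [card_erase_of_mem (mem_filter.1 hi).1, hQ] using mem_violators_erase_of_mem_extremes hi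
  · rintro ⟨R, i⟩ h
    have hi : i ∈ violators f R := (mem_sigma.1 h).2
    simp [erase_insert (notMem_of_mem_violators hi)]
  · rintro ⟨Q, i⟩ h
    have hi : i ∈ extremes f Q := (mem_sigma.1 h).2
    simp [insert_erase (mem_filter.1 hi).1]

theorem sum_card_violators_le (hf : Monotone f) {d : ℕ} (hd : CombinatorialDimLE f d) (r : ℕ) :
    ∑ R ∈ powersetCard r univ, #(violators f R) ≤ d * (Fintype.card ι).choose (r + 1) :=
  calc ∑ R ∈ powersetCard r univ, #(violators f R)
    _ = ∑ Q ∈ powersetCard (r + 1) univ, #(extremes f Q) :=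
      sum_card_violators_eq_sum_card_extremes f r
    _ ≤ #(powersetCard (r + 1) (univ : Finset ι)) * d :=
      sum_le_card_nsmul _ _ d fun Q _ ↦ card_extremes_le hf hd Q
    _ = d * (Fintype.card ι).choose (r + 1) := by
      rw [card_powersetCard, card_univ, mul_comm]

end Sampling

theorem stmt_0_general {α ι T : Type*} [DecidableEq α] [Fintype ι] [Preorder T] [DecidableLT T]
    {f : Finset α → T} (hf : Monotone f) {d : ℕ} (hd : CombinatorialDimLE f d) (π : ι → α) (r : ℕ) :
    ∑ R ∈ powersetCard r (univ : Finset ι), #{i | f (R.image π) < f (insert (π i) (R.image π))}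
      ≤ d * (Fintype.card ι).choose (r + 1) := by
  classical
  have hf_comp : Monotone (f ∘ image π) := hf.comp (image_mono π)
  simpa only [violators, Function.comp_apply, image_insert] using
    sum_card_violators_le hf_comp (hd.comp_image π) r

/-- Sampling lemma for LP-type problems (Lemma 1): the sum of the sizes of the
violator sets over all `r`-element subsets of the index set `I` is at most
`d * C(m, r+1)`; equivalently, the expected violator set size is at most
`d * (m - r)/(r + 1)`. -/
theorem stmt_0 {α ι T : Type*} [DecidableEq α] [Fintype ι] [LinearOrder T]
    (f : Finset α → T)
    (mono : ∀ F G : Finset α, F ⊆ G → f F ≤ f G)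
    (locality : ∀ F G : Finset α, F ⊆ G → f F = f G →
      ∀ h : α, f G < f (insert h G) → f F < f (insert h F))
    (d : ℕ)
    (dim : ∀ B : Finset α, (∀ B' : Finset α, B' ⊂ B → f B' < f B) → B.card ≤ d)
    (m : ℕ) (hm : Fintype.card ι = m)
    (π : ι → α) (r : ℕ) (hr1 : 1 ≤ r) (hrm : r < m) :
    ∑ R ∈ Finset.powersetCard r (Finset.univ : Finset ι),
        (Finset.univ.filter (fun i : ι =>
          f (R.image π) < f (insert (π i) (R.image π)))).card
      ≤ d * Nat.choose m (r + 1) := by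
  subst hm
  exact stmt_0_general (fun F G ↦ mono F G) dim π r
end

section
/- Let (H, f) be an LP-type problem (f satisfies Monotonicity and Locality), let B ⊆ H satisfy f(B) = f(H) (an optimal basis or any optimal subset), and let R ⊆ H satisfy f(R) < f(H). Then there exists an element h ∈ B with f(R) < f(R ∪ {h}). -/
open Finset

/-!
If no element of `B` violates `R`, the elements of `B` can be added to `R` one at a time without
changing the value: an element violating some intermediate `R ∪ S` with `f (R ∪ S) = f R` would, by
locality, already violate `R`. Hence `f B ≤ f (R ∪ B) = f R`.
-/

/-- An objective function of LP-type: monotone and local. The ground set is the whole type `α`,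
which need not be finite as only finite sets of constraints are evaluated, and the values need not
be linearly ordered. -/
structure IsLPType {α T : Type*} [DecidableEq α] [Preorder T] (f : Finset α → T) : Prop where
  monotone : Monotone f
  lt_insert_of_subset : ∀ ⦃F G : Finset α⦄, F ⊆ G → f F = f G →
    ∀ a : α, f G < f (insert a G) → f F < f (insert a F)

theorem IsLPType.union_eq_of_forall_not_lt_insert {α T : Type*} [DecidableEq α] [PartialOrder T]
    {f : Finset α → T} (hf : IsLPType f) {R S : Finset α}
    (hS : ∀ a ∈ S, ¬ f R < f (insert a R)) : f (R ∪ S) = f R := by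
  induction S using Finset.induction_on with
  | empty => rw [union_empty]
  | insert a S _ ih =>
    obtain ⟨ha, hS⟩ := (forall_mem_insert ..).mp hS
    have union_eq : f (R ∪ S) = f R := ih hS
    have not_lt_insert : ¬ f (R ∪ S) < f (insert a (R ∪ S)) := fun hlt =>
      ha (hf.lt_insert_of_subset subset_union_left union_eq.symm a hlt)
    have le_insert : f (R ∪ S) ≤ f (insert a (R ∪ S)) := hf.monotone (subset_insert _ _)
    rw [union_insert, ← le_insert.eq_of_not_lt not_lt_insert, union_eq]

theorem stmt_2_general {α T : Type*} [DecidableEq α] [PartialOrder T] {f : Finset α → T}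
    (hf : IsLPType f) {B R : Finset α} (hBR : ¬ f B ≤ f R) :
    ∃ h ∈ B, f R < f (insert h R) := by
  by_contra! no_violator
  refine hBR ?_
  calc
    f B ≤ f (R ∪ B) := hf.monotone subset_union_right
    _ = f R := hf.union_eq_of_forall_not_lt_insert no_violator

/-- For an LP-type problem `(H, f)`, if `B ⊆ H` satisfies `f(B) = f(H)` and
`R ⊆ H` satisfies `f(R) < f(H)`, then some element `h ∈ B` violates `R`, i.e.
`f(R) < f(R ∪ {h})`. -/
theorem stmt_2 {α T : Type*} [Fintype α] [DecidableEq α] [LinearOrder T]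
    (f : Finset α → T)
    (mono : ∀ F G : Finset α, F ⊆ G → f F ≤ f G)
    (locality : ∀ F G : Finset α, F ⊆ G → f F = f G →
      ∀ h : α, f G < f (insert h G) → f F < f (insert h F))
    (B R : Finset α)
    (hB : f B = f Finset.univ)
    (hR : f R < f Finset.univ) :
    ∃ h ∈ B, f R < f (insert h R) :=
  stmt_2_general ⟨mono, locality⟩ (hB ▸ hR).not_ge
end

section
/- Let T ≥ 1 be an integer, C > 0 and M ≥ 0 be real numbers, and let ρ_1, …, ρ_T ∈ [0, C] be real numbers with Σ_{t=1}^T ρ_t ≥ M. Then Π_{t=1}^T (1 + ρ_t) ≥ (1 + C)^{⌊M/C⌋}. -/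
open Finset

/-! The function `x ↦ (1 + C) ^ (x / C)` is convex and agrees with `1 + x` at `x = 0` and `x = C`,
so it lies below this chord on `[0, C]`. Multiplying these bounds turns the product into a single
power of `1 + C`, whose exponent is the sum divided by `C`. -/

section RealExponent

variable {ι : Type*} {s : Finset ι} {C : ℝ} {ρ : ι → ℝ}

theorem one_add_rpow_div_le_one_add {x : ℝ} (hC : 0 < C) (hx : x ∈ Set.Icc 0 C) :
    (1 + C) ^ (x / C) ≤ 1 + x := by
  have bernoulli : (1 + C) ^ (x / C) ≤ 1 + x / C * C :=
    rpow_one_add_le_one_add_mul_self (by linarith) (div_nonneg hx.1 hC.le)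
      ((div_le_one hC).2 hx.2)
  rwa [div_mul_cancel₀ x hC.ne'] at bernoulli

theorem one_add_rpow_sum_div_le_prod_one_add (hC : 0 < C) (hρ : ∀ i ∈ s, ρ i ∈ Set.Icc 0 C) :
    (1 + C) ^ ((∑ i ∈ s, ρ i) / C) ≤ ∏ i ∈ s, (1 + ρ i) :=
  calc (1 + C) ^ ((∑ i ∈ s, ρ i) / C)
      = ∏ i ∈ s, (1 + C) ^ (ρ i / C) := by
        rw [sum_div, Real.rpow_sum_of_pos (by positivity)]
    _ ≤ ∏ i ∈ s, (1 + ρ i) :=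
        prod_le_prod (fun _ _ ↦ by positivity) fun i hi ↦ one_add_rpow_div_le_one_add hC (hρ i hi)

theorem stmt_9_general {M : ℝ} (hC : 0 < C) (hρ : ∀ i ∈ s, ρ i ∈ Set.Icc 0 C)
    (hsum : M ≤ ∑ i ∈ s, ρ i) :
    (1 + C) ^ (M / C) ≤ ∏ i ∈ s, (1 + ρ i) :=
  calc (1 + C) ^ (M / C)
      ≤ (1 + C) ^ ((∑ i ∈ s, ρ i) / C) := by gcongr; linarith
    _ ≤ ∏ i ∈ s, (1 + ρ i) := one_add_rpow_sum_div_le_prod_one_add hC hρ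

end RealExponent

/-- If `ρ_t ∈ [0,C]` for all `t` and `∑_t ρ_t ≥ M`, then
`∏_{t=1}^T (1 + ρ_t) ≥ (1 + C)^⌊M/C⌋`. -/
theorem stmt_9 (T : ℕ) (hT : 1 ≤ T) (C M : ℝ) (hC : 0 < C) (hM : 0 ≤ M)
    (ρ : Fin T → ℝ) (hρ : ∀ t, ρ t ∈ Set.Icc (0 : ℝ) C)
    (hsum : M ≤ ∑ t, ρ t) :
    (1 + C) ^ ⌊M / C⌋₊ ≤ ∏ t, (1 + ρ t) := by
  rw [← Real.rpow_natCast]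
  exact (Real.rpow_le_rpow_of_exponent_le (by linarith) (Nat.floor_le (by positivity))).trans
    (stmt_9_general hC (fun t _ ↦ hρ t) hsum)
end

section
/- Let d ≥ 1 and T ≥ 1 be integers, C > 0 a real number, and let ρ(j, t) ∈ [0, C] be real numbers for j ∈ {1, …, d} and t ∈ {1, …, T} such that Σ_{j=1}^d ρ(j, t) ≥ C for every t. Then there exists an index j* ∈ {1, …, d} with Π_{t=1}^T (1 + ρ(j*, t)) ≥ (1 + C)^{⌊T/d⌋}. -/
open Finset

/-!
In each round `t`, the inequality `1 + ∑ j, ρ j t ≤ ∏ j, (1 + ρ j t)` turns the bound on the sum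
into `1 + C ≤ ∏ j, (1 + ρ j t)`. Multiplying over all rounds and exchanging the two products, the
growth factors `∏ t, (1 + ρ j t)` multiply to at least `(1 + C) ^ T`. The largest of these `d`
factors therefore has `d`-th power at least `(1 + C) ^ T`.
-/

theorem one_add_sum_le_prod_one_add {ι R : Type*} [CommSemiring R] [PartialOrder R]
    [IsOrderedRing R] (s : Finset ι) {f : ι → R} (hf : ∀ i ∈ s, 0 ≤ f i) :
    1 + ∑ i ∈ s, f i ≤ ∏ i ∈ s, (1 + f i) := by
  induction s using Finset.cons_induction with
  | empty => simp
  | cons a s ha ih =>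
    obtain ⟨ha₀, hs₀⟩ := forall_mem_cons ha _ |>.mp hf
    rw [sum_cons, prod_cons]
    calc 1 + (f a + ∑ i ∈ s, f i)
        ≤ 1 + (f a + ∑ i ∈ s, f i) + f a * ∑ i ∈ s, f i :=
          le_add_of_nonneg_right (mul_nonneg ha₀ (sum_nonneg hs₀))
      _ = (1 + f a) * (1 + ∑ i ∈ s, f i) := by ring
      _ ≤ (1 + f a) * ∏ i ∈ s, (1 + f i) :=
          mul_le_mul_of_nonneg_left (ih hs₀) (add_nonneg zero_le_one ha₀)

theorem exists_prod_le_pow_card {ι R : Type*} [CommMonoidWithZero R] [LinearOrder R]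
    [ZeroLEOneClass R] [PosMulMono R] {s : Finset ι} (hs : s.Nonempty) {f : ι → R}
    (hf : ∀ i ∈ s, 0 ≤ f i) : ∃ i ∈ s, ∏ j ∈ s, f j ≤ f i ^ #s := by
  obtain ⟨i, hi, hmax⟩ := s.exists_max_image f hs
  exact ⟨i, hi, (prod_le_prod hf hmax).trans_eq (prod_const (f i))⟩

theorem exists_pow_card_le_prod_pow_card {ι τ R : Type*} [Fintype ι] [Nonempty ι] [Fintype τ]
    [CommMonoidWithZero R] [LinearOrder R] [ZeroLEOneClass R] [PosMulMono R] {b : R} (hb : 0 ≤ b)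
    {f : ι → τ → R} (hf : ∀ i t, 0 ≤ f i t) (hprod : ∀ t, b ≤ ∏ i, f i t) :
    ∃ i, b ^ Fintype.card τ ≤ (∏ t, f i t) ^ Fintype.card ι := by
  obtain ⟨i, -, hi⟩ := exists_prod_le_pow_card (univ_nonempty (α := ι))
    (f := fun i ↦ ∏ t, f i t) fun i _ ↦ prod_nonneg fun t _ ↦ hf i t
  refine ⟨i, ?_⟩
  calc b ^ Fintype.card τ
      = ∏ _t : τ, b := (prod_const b).symm
    _ ≤ ∏ t, ∏ i, f i t := prod_le_prod (fun _ _ ↦ hb) fun t _ ↦ hprod t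
    _ = ∏ i, ∏ t, f i t := prod_comm
    _ ≤ (∏ t, f i t) ^ Fintype.card ι := hi

theorem pow_div_le_of_pow_le_pow {R : Type*} [MonoidWithZero R] [LinearOrder R]
    [ZeroLEOneClass R] [PosMulStrictMono R] [MulPosMono R] {a b : R} {m n : ℕ} (ha : 1 ≤ a)
    (hb : 0 ≤ b) (hn : n ≠ 0) (h : a ^ m ≤ b ^ n) : a ^ (m / n) ≤ b := by
  refine le_of_pow_le_pow_left₀ hn hb ?_
  calc (a ^ (m / n)) ^ n
      = a ^ (m / n * n) := (pow_mul a _ _).symm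
    _ ≤ a ^ m := pow_le_pow_right₀ ha (Nat.div_mul_le_self m n)
    _ ≤ b ^ n := h

theorem stmt_10_general {ι τ R : Type*} [Fintype ι] [Nonempty ι] [Fintype τ] [CommSemiring R]
    [LinearOrder R] [IsStrictOrderedRing R] {C : R} (hC : 0 ≤ C) {ρ : ι → τ → R}
    (hρ : ∀ j t, 0 ≤ ρ j t) (hsum : ∀ t, C ≤ ∑ j, ρ j t) :
    ∃ j, (1 + C) ^ (Fintype.card τ / Fintype.card ι) ≤ ∏ t, (1 + ρ j t) := by
  have hfactor (j : ι) (t : τ) : 0 ≤ 1 + ρ j t := add_nonneg zero_le_one (hρ j t)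
  have hround (t : τ) : 1 + C ≤ ∏ j, (1 + ρ j t) :=
    (add_le_add_right (hsum t) 1).trans (one_add_sum_le_prod_one_add univ fun j _ ↦ hρ j t)
  obtain ⟨j, hj⟩ := exists_pow_card_le_prod_pow_card (add_nonneg zero_le_one hC) hfactor hround
  exact ⟨j, pow_div_le_of_pow_le_pow (le_add_of_nonneg_right hC)
    (prod_nonneg fun t _ ↦ hfactor j t) Fintype.card_ne_zero hj⟩

/-- If `ρ(j,t) ∈ [0,C]` and for every round `t` the values sum to at least `C`
over `j ∈ {1,…,d}`, then some index `j*` satisfies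
`∏_{t=1}^T (1 + ρ(j*,t)) ≥ (1 + C)^⌊T/d⌋`. -/
theorem stmt_10 (d T : ℕ) (hd : 1 ≤ d) (hT : 1 ≤ T) (C : ℝ) (hC : 0 < C)
    (ρ : Fin d → Fin T → ℝ)
    (hρ : ∀ j t, ρ j t ∈ Set.Icc (0 : ℝ) C)
    (hsum : ∀ t, C ≤ ∑ j, ρ j t) :
    ∃ j : Fin d, (1 + C) ^ (T / d) ≤ ∏ t, (1 + ρ j t) := by
  have : Nonempty (Fin d) := ⟨⟨0, hd⟩⟩
  simpa only [Fintype.card_fin] using stmt_10_general hC.le (fun j t ↦ (hρ j t).1) hsum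
end

section
/- Let E be a finite-dimensional real inner product space (a Euclidean space) and for finite nonempty P ⊆ E let r(P) = inf over c ∈ E of max_{p ∈ P} dist(c, p). Let F ⊆ G be finite nonempty subsets of E with r(F) = r(G), and let h ∈ E be a point with r(G) < r(G ∪ {h}). Then r(F) < r(F ∪ {h}). (Locality of the smallest enclosing ball: since F and G have equal radii, their smallest enclosing balls coincide, and a point lying outside the ball of G lies outside the ball of F.) -/
open Finset

/-!
Let `r` be the common radius of `F` and `G`. By uniform convexity, if the points of `F` are almost
within distance `r` of both `c` and `d`, and `c` and `d` are far apart, then all these points are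
within distance less than `r` of the midpoint of `c` and `d`, which is impossible. Hence almost
optimal centers for `F` are close to each other. If adding `h` did not increase the radius of `F`,
an almost optimal center for `F ∪ {h}` and one for `G` would both be almost optimal for `F`, hence
close, so the latter would almost serve `G ∪ {h}` with radius `r`.
-/

section PseudoMetricSpace

open Metric Bornology

variable {X : Type*} [PseudoMetricSpace X] {S : Set X} {c : X} {R : ℝ}

/-- The radius of the smallest enclosing ball (Chebyshev radius) of a bounded set `S`: the infimum
over all centers `c` of the largest distance from `c` to a point of `S`. For unbounded `S` the
real-valued suprema are `0`, and so is the radius. -/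
noncomputable def enclosingRadius (S : Set X) : ℝ :=
  ⨅ c : X, ⨆ p ∈ S, dist c p

lemma iSup_mem_dist_nonneg (S : Set X) (c : X) : 0 ≤ ⨆ p ∈ S, dist c p :=
  Real.iSup_nonneg fun _ => Real.iSup_nonneg fun _ => dist_nonneg

lemma enclosingRadius_nonneg (S : Set X) : 0 ≤ enclosingRadius S :=
  Real.iInf_nonneg (iSup_mem_dist_nonneg S)

lemma enclosingRadius_le_of_subset_closedBall (hS : S.Nonempty) (h : S ⊆ closedBall c R) :
    enclosingRadius S ≤ R := by
  have hR : 0 ≤ R := nonempty_closedBall.1 (hS.mono h)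
  calc enclosingRadius S ≤ ⨆ p ∈ S, dist c p :=
        ciInf_le ⟨0, Set.forall_mem_range.2 (iSup_mem_dist_nonneg S)⟩ c
    _ ≤ R := Real.iSup_le (fun _ => Real.iSup_le (fun hp => mem_closedBall'.1 (h hp)) hR) hR

lemma dist_le_iSup_mem_dist (hS : IsBounded S) {p : X} (hp : p ∈ S) (c : X) :
    dist c p ≤ ⨆ q ∈ S, dist c q := by
  obtain ⟨R, hR⟩ := hS.subset_closedBall c
  have hbdd : BddAbove (⋃ q, Set.range fun _ : q ∈ S => dist c q) := by
    refine ⟨R, fun _ hx => ?_⟩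
    obtain ⟨q, hq, rfl⟩ := Set.mem_iUnion.1 hx
    exact mem_closedBall'.1 (hR hq)
  exact le_ciSup₂ (f := fun q (_ : q ∈ S) => dist c q) hbdd p hp

lemma exists_subset_closedBall_of_enclosingRadius_lt [Nonempty X] (hS : IsBounded S)
    (hR : enclosingRadius S < R) : ∃ c, S ⊆ closedBall c R := by
  obtain ⟨c, hc⟩ := exists_lt_of_ciInf_lt hR
  exact ⟨c, fun p hp => mem_closedBall'.2 ((dist_le_iSup_mem_dist hS hp c).trans hc.le)⟩

end PseudoMetricSpace

section UniformConvexSpace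

open Metric Bornology

variable {E : Type*} [SeminormedAddCommGroup E] [NormedSpace ℝ E] [UniformConvexSpace E]

lemma exists_forall_norm_add_le_two_mul_sub {ε R : ℝ} (hε : 0 < ε) (hR : 0 ≤ R) :
    ∃ η > 0, ∀ x y : E, ‖x‖ ≤ R + η → ‖y‖ ≤ R + η → ε ≤ ‖x - y‖ → ‖x + y‖ ≤ 2 * (R - η) := by
  obtain ⟨δ, hδ, hconv⟩ :=
    exists_forall_closed_ball_dist_add_le_two_mul_sub E (half_pos hε) R
  obtain ⟨η, hη, hηlt⟩ := exists_between (show 0 < min (ε / 4) (δ / 4) by positivity)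
  obtain ⟨hηε, hηδ⟩ := lt_min_iff.1 hηlt
  have exists_near (x : E) (hx : ‖x‖ ≤ R + η) : ∃ x', ‖x - x'‖ ≤ η ∧ ‖x'‖ ≤ R := by
    simpa only [dist_eq_norm, sub_zero] using
      exists_dist_le_le hη.le hR (z := (0 : E)) ((dist_zero_right x).trans_le hx)
  refine ⟨η, hη, fun x y hx hy hxy => ?_⟩
  obtain ⟨x', hxx', hx'⟩ := exists_near x hx
  obtain ⟨y', hyy', hy'⟩ := exists_near y hy
  have hsep : ε / 2 ≤ ‖x' - y'‖ := by
    have : ‖x - y‖ ≤ ‖x' - y'‖ + ‖x - x'‖ + ‖y - y'‖ := by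
      rw [show x - y = x' - y' + (x - x') - (y - y') by abel]
      exact (norm_sub_le _ _).trans (by gcongr; exact norm_add_le _ _)
    linarith
  calc ‖x + y‖ = ‖x' + y' + (x - x') + (y - y')‖ := by congr 1; abel
    _ ≤ ‖x' + y'‖ + ‖x - x'‖ + ‖y - y'‖ := norm_add₃_le
    _ ≤ 2 * R - δ + η + η := by gcongr; exact hconv hx' hy' hsep
    _ ≤ 2 * (R - η) := by linarith

lemma exists_forall_closedBall_inter_closedBall_subset {ε R : ℝ} (hε : 0 < ε) (hR : 0 ≤ R) :
    ∃ η > 0, ∀ c d : E, ε ≤ dist c d →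
      closedBall c (R + η) ∩ closedBall d (R + η) ⊆ closedBall (midpoint ℝ c d) (R - η) := by
  obtain ⟨η, hη, hconv⟩ := exists_forall_norm_add_le_two_mul_sub (E := E) hε hR
  refine ⟨η, hη, fun c d hcd p ⟨hpc, hpd⟩ => ?_⟩
  rw [mem_closedBall, dist_eq_norm] at hpc hpd ⊢
  have hmid : p - midpoint ℝ c d = (2⁻¹ : ℝ) • ((p - c) + (p - d)) := by
    rw [midpoint_eq_smul_add, invOf_eq_inv]
    module
  have hsum : ‖(p - c) + (p - d)‖ ≤ 2 * (R - η) :=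
    hconv _ _ hpc hpd (by rwa [sub_sub_sub_cancel_left, ← dist_eq_norm, dist_comm])
  rw [hmid, norm_smul_of_nonneg (by norm_num)]
  linarith

lemma exists_forall_dist_lt_of_subset_closedBall {S : Set E} (hS : S.Nonempty) {ε : ℝ}
    (hε : 0 < ε) :
    ∃ η > 0, ∀ c d : E, S ⊆ closedBall c (enclosingRadius S + η) →
      S ⊆ closedBall d (enclosingRadius S + η) → dist c d < ε := by
  obtain ⟨η, hη, hlens⟩ :=
    exists_forall_closedBall_inter_closedBall_subset (E := E) hε (enclosingRadius_nonneg S)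
  refine ⟨η, hη, fun c d hc hd => lt_of_not_ge fun hcd => ?_⟩
  have hle : enclosingRadius S ≤ enclosingRadius S - η :=
    enclosingRadius_le_of_subset_closedBall hS ((Set.subset_inter hc hd).trans (hlens c d hcd))
  linarith

theorem stmt_15_general {F G : Set E} (hF : F.Nonempty) (hG : IsBounded G) (hFG : F ⊆ G) {h : E}
    (hr : enclosingRadius F = enclosingRadius G)
    (hviol : enclosingRadius G < enclosingRadius (insert h G)) :
    enclosingRadius F < enclosingRadius (insert h F) := by
  contrapose! hviol with hle
  refine le_of_forall_pos_le_add fun ε hε => ?_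
  obtain ⟨η, hη, hclose⟩ := exists_forall_dist_lt_of_subset_closedBall hF (half_pos hε)
  obtain ⟨θ, hθ, hθlt⟩ := exists_between (lt_min hη (half_pos hε))
  obtain ⟨hθη, hθε⟩ := lt_min_iff.1 hθlt
  obtain ⟨c, hc⟩ : ∃ c, insert h F ⊆ closedBall c (enclosingRadius F + θ) :=
    exists_subset_closedBall_of_enclosingRadius_lt ((hG.subset hFG).insert h) (by linarith)
  obtain ⟨d, hd⟩ : ∃ d, G ⊆ closedBall d (enclosingRadius F + θ) :=
    exists_subset_closedBall_of_enclosingRadius_lt hG (by linarith)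
  have hcd : dist c d < ε / 2 := hclose c d
    ((Set.subset_insert h F).trans (hc.trans (closedBall_subset_closedBall (by gcongr))))
    ((hFG.trans hd).trans (closedBall_subset_closedBall (by gcongr)))
  have hhd : dist h d ≤ enclosingRadius G + ε :=
    calc dist h d ≤ dist h c + dist c d := dist_triangle h c d
      _ ≤ enclosingRadius F + θ + ε / 2 := by gcongr; exact hc (Set.mem_insert h F)
      _ ≤ enclosingRadius G + ε := by linarith
  exact enclosingRadius_le_of_subset_closedBall (Set.insert_nonempty h G)
    (Set.insert_subset hhd (hd.trans (closedBall_subset_closedBall (by linarith))))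

end UniformConvexSpace

/-- Locality of the smallest enclosing ball: if `F ⊆ G` are finite nonempty
sets with equal smallest enclosing ball radii `r(·) = ⨅ c, max_{p ∈ ·} dist c p`,
and adding the point `h` to `G` strictly increases the radius, then adding `h`
to `F` strictly increases the radius as well. -/
theorem stmt_15 {E : Type*} [NormedAddCommGroup E] [InnerProductSpace ℝ E]
    [FiniteDimensional ℝ E] [DecidableEq E]
    (F G : Finset E) (hF : F.Nonempty) (hFG : F ⊆ G) (h : E)
    (hr : (⨅ c : E, ⨆ p ∈ F, dist c p) = ⨅ c : E, ⨆ p ∈ G, dist c p)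
    (hviol : (⨅ c : E, ⨆ p ∈ G, dist c p)
      < ⨅ c : E, ⨆ p ∈ insert h G, dist c p) :
    (⨅ c : E, ⨆ p ∈ F, dist c p) < ⨅ c : E, ⨆ p ∈ insert h F, dist c p := by
  simp only [← mem_coe, coe_insert] at hviol ⊢
  exact stmt_15_general (coe_nonempty.2 hF) G.finite_toSet.isBounded (coe_subset.2 hFG) hr hviol
end
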